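/- Let G be a finite DAG with transfer polynomials m as above, and let e₁, e₂, e₃ be edges such that e₂ and e₃ are both reachable from e₁. Let e be the last (in topological order) common bottleneck between e₁ and e₂ and between e₁ and e₃ (i.e., the last edge lying on every path from e₁ to e₂ and on every path from e₁ to e₃). Then m_{e₁ e}(x) = gcd(m_{e₁ e₂}(x), m_{e₁ e₃}(x)) in the polynomial ring. -/

import Mathlib

/-!
Transfer polynomials are multiplicative along bottlenecks, so with `e` the last common bottleneck
`m_{e₁e₂} = m_{e₁e} m_{ee₂}` and `m_{e₁e₃} = m_{e₁e} m_{ee₃}`, and it remains to see that `m_{ee₂}`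
and `m_{ee₃}` are coprime. In a DAG a path is determined by its starting edge and its set of
transitions, so no monomials of a transfer polynomial cancel and each variable has degree at most
one. Hence in a factorization `m_{ab} = d g` the factors share no variable, and every product of a
monomial of `d` and a monomial of `g` is the monomial of a path. If `x_{uw}` occurs in `d` and no
`x_{ww'}` does, multiplying a monomial of `d` through `x_{uw}` by the `g`-part of an arbitrary path
`Q` gives a path through `w` which leaves `w` by a transition of `Q`; so `Q` passes through `w`, and
`w` is a bottleneck. A nonconstant common factor of `m_{ee₂}` and `m_{ee₃}` would in this way
produce a common bottleneck after `e`.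
-/

/-- Adjacency of edges in a network: edge `e'` can follow edge `e` in a path when the
destination node of `e` is the source node of `e'`. -/
def EdgeAdj {V E : Type*} (src dst : E → V) (e e' : E) : Prop := dst e = src e'

/-- `l` is a directed path (a nonempty sequence of consecutively adjacent edges) from
edge `a` to edge `b`. -/
def IsEdgePath {V E : Type*} (src dst : E → V) (a b : E) (l : List E) : Prop :=
  l.Chain' (EdgeAdj src dst) ∧ l.head? = some a ∧ l.getLast? = some b

/-- The monomial `t_P(x)` of a path `P = (e₁,…,e_k)`: the product of the coding variables
`x_{eᵢeᵢ₊₁}` along the path. -/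
noncomputable def pathMonomial {E : Type*} (F : Type*) [Field F] (l : List E) :
    MvPolynomial (E × E) F :=
  ((l.zip l.tail).map fun p => (MvPolynomial.X p : MvPolynomial (E × E) F)).prod

/-- The transfer polynomial `m_{ab}(x) = Σ_{P ∈ P_{ab}} t_P(x)`, where `Paths a b` is the
(finite) set of directed paths from `a` to `b`. -/
noncomputable def transferPoly {E : Type*} (F : Type*) [Field F]
    (Paths : E → E → Finset (List E)) (a b : E) : MvPolynomial (E × E) F :=
  ∑ l ∈ Paths a b, pathMonomial F l

open MvPolynomial Relation

section Preliminaries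

theorem exists_mem_forall_not_rel_of_acyclic {α : Type*} {r : α → α → Prop}
    (hr : ∀ a, ¬ TransGen r a a) {s : Finset α} (hs : s.Nonempty) :
    ∃ a ∈ s, ∀ b ∈ s, ¬ r a b := by
  let _ : Preorder α :=
    { le := ReflTransGen r
      le_refl := fun _ => .refl
      le_trans := fun _ _ _ => .trans }
  obtain ⟨a, ha, hmax⟩ := s.exists_maximal hs
  exact ⟨a, ha, fun b hb hab => hr a (.head' hab (hmax hb (.single hab)))⟩

theorem dvd_of_dvd_mul_of_isRelPrime {M : Type*} [CommMonoidWithZero M] [GCDMonoid M]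
    {d m x y : M} (hxy : IsRelPrime x y) (hx : d ∣ m * x) (hy : d ∣ m * y) : d ∣ m :=
  calc
    d ∣ gcd (m * x) (m * y) := dvd_gcd hx hy
    _ ∣ m * gcd x y := (gcd_mul_left' m x y).dvd
    _ ∣ m := (gcd_isUnit_iff_isRelPrime.2 hxy).mul_right_dvd.2 dvd_rfl

variable {R σ : Type*} [CommSemiring R] [NoZeroDivisors R] {p q : MvPolynomial σ R}

theorem vars_subset_vars_of_dvd (hpq : p ∣ q) (hq : q ≠ 0) : p.vars ⊆ q.vars := by
  obtain ⟨r, rfl⟩ := hpq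
  intro x hx
  rw [mem_vars_iff_degreeOf_ne_zero] at hx ⊢
  rw [degreeOf_mul_eq (left_ne_zero_of_mul hq) (right_ne_zero_of_mul hq)]
  omega

theorem disjoint_vars_of_degreeOf_mul_le_one (hpq : p * q ≠ 0)
    (hdeg : ∀ x, degreeOf x (p * q) ≤ 1) : Disjoint p.vars q.vars := by
  rw [Finset.disjoint_left]
  intro x hxp hxq
  have hx := hdeg x
  rw [degreeOf_mul_eq (left_ne_zero_of_mul hpq) (right_ne_zero_of_mul hpq)] at hx
  rw [mem_vars_iff_degreeOf_ne_zero] at hxp hxq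
  omega

theorem add_mem_support_mul_of_disjoint_vars (hpq : Disjoint p.vars q.vars) {s t : σ →₀ ℕ}
    (hs : s ∈ p.support) (ht : t ∈ q.support) : s + t ∈ (p * q).support := by
  have unique : UniqueAdd p.support q.support s t := by
    intro s' t' hs' ht' hadd
    have agree (x : σ) : s' x = s x ∧ t' x = t x := by
      have hx : s' x + t' x = s x + t x := DFunLike.congr_fun hadd x
      by_cases hxp : x ∈ p.vars
      · have hxq := Finset.disjoint_left.1 hpq hxp
        have := mem_support_notMem_vars_zero ht hxq
        have := mem_support_notMem_vars_zero ht' hxq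
        omega
      · have := mem_support_notMem_vars_zero hs hxp
        have := mem_support_notMem_vars_zero hs' hxp
        omega
    exact ⟨Finsupp.ext fun x => (agree x).1, Finsupp.ext fun x => (agree x).2⟩
  have hcoeff : coeff (s + t) (p * q) = coeff s p * coeff t q :=
    AddMonoidAlgebra.coeff_mul_add_of_uniqueAdd unique
  rw [mem_support_iff, hcoeff]
  exact mul_ne_zero (mem_support_iff.1 hs) (mem_support_iff.1 ht)

theorem vars_nonempty_of_not_isUnit {K : Type*} [Field K] {p : MvPolynomial σ K} (hp : p ≠ 0)
    (hunit : ¬ IsUnit p) : p.vars.Nonempty := by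
  rw [Finset.nonempty_iff_ne_empty]
  intro hvars
  rw [vars_eq_empty_iff_eq_C] at hvars
  rw [hvars] at hp hunit
  exact hunit ((isUnit_iff_ne_zero.2 (C_ne_zero.1 hp)).map C)

end Preliminaries

section ConsecutivePairs

variable {E : Type*} {u w : E} {l : List E}

theorem mem_consecutivePairs_iff_infix : (u, w) ∈ l.consecutivePairs ↔ [u, w] <:+: l := by
  induction l with
  | nil => simp
  | cons x l ih =>
    cases l with
    | nil => simp [List.consecutivePairs, List.infix_cons_iff]
    | cons y l =>
      simp only [List.consecutivePairs, List.tail_cons, List.zip_cons_cons, List.mem_cons,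
        Prod.mk.injEq, List.infix_cons_iff (l₂ := y :: l), List.cons_prefix_cons,
        List.nil_prefix, and_true] at ih ⊢
      rw [ih]

theorem nodup_consecutivePairs (hl : l.Nodup) : l.consecutivePairs.Nodup := by
  apply List.Nodup.of_map Prod.snd
  rw [List.map_snd_zip (by simp)]
  exact hl.tail

theorem getLast?_eq_or_exists_mem_consecutivePairs (hw : w ∈ l) :
    l.getLast? = some w ∨ ∃ w', (w, w') ∈ l.consecutivePairs := by
  obtain ⟨p, q, rfl⟩ := List.append_of_mem hw
  cases q with
  | nil => exact .inl (by simp)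
  | cons w' q => exact .inr ⟨w', mem_consecutivePairs_iff_infix.2 ⟨p, q, by simp⟩⟩

theorem rel_of_mem_consecutivePairs {r : E → E → Prop} (hl : l.IsChain r)
    (huw : (u, w) ∈ l.consecutivePairs) : r u w :=
  List.isChain_pair.1 (hl.infix (mem_consecutivePairs_iff_infix.1 huw))

open scoped Classical in
/-- The exponent vector of the monomial `t_P(x)` of a path `P`, so that its value at `(u, w)` is
the number of times that `P` passes from `u` directly to `w`. -/
noncomputable def pathExponent (l : List E) : E × E →₀ ℕ :=
  Multiset.toFinsupp (l.consecutivePairs : Multiset (E × E))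

theorem mem_support_pathExponent {x : E × E} :
    x ∈ (pathExponent l).support ↔ x ∈ l.consecutivePairs := by
  simp [pathExponent]

theorem pathExponent_apply_le_one (hl : l.Nodup) (x : E × E) : pathExponent l x ≤ 1 := by
  classical
  rw [pathExponent, Multiset.toFinsupp_apply]
  exact Multiset.nodup_iff_count_le_one.1 (Multiset.coe_nodup.2 (nodup_consecutivePairs hl)) x

theorem pathMonomial_eq_monomial (F : Type*) [Field F] (l : List E) :
    pathMonomial F l = monomial (pathExponent l) 1 := by
  classical
  unfold pathMonomial pathExponent List.consecutivePairs
  induction l.zip l.tail with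
  | nil => simp
  | cons x t ih =>
    rw [List.map_cons, List.prod_cons, ih, ← Multiset.cons_coe, ← Multiset.singleton_add, map_add,
      Multiset.toFinsupp_singleton, X, monomial_mul, one_mul]

theorem pathMonomial_append_cons (F : Type*) [Field F] (p : List E) (c : E) (q : List E) :
    pathMonomial F (p ++ c :: q) = pathMonomial F (p ++ [c]) * pathMonomial F (c :: q) := by
  induction p with
  | nil => simp [pathMonomial]
  | cons x p ih => cases p <;> simp_all [pathMonomial, mul_assoc]

end ConsecutivePairs

section Paths

variable {V E : Type*} {src dst : E → V} {a b c : E} {l l' : List E}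

theorem isEdgePath_iff : IsEdgePath src dst a b l ↔
    l.IsChain (EdgeAdj src dst) ∧ l.head? = some a ∧ l.getLast? = some b :=
  Iff.rfl

namespace IsEdgePath

theorem isChain (h : IsEdgePath src dst a b l) : l.IsChain (EdgeAdj src dst) :=
  (isEdgePath_iff.1 h).1

theorem pairwise_transGen (h : IsEdgePath src dst a b l) :
    l.Pairwise (TransGen (EdgeAdj src dst)) :=
  (h.isChain.imp fun _ _ => .single).pairwise

theorem nodup (hacyc : ∀ a : E, ¬ TransGen (EdgeAdj src dst) a a)
    (h : IsEdgePath src dst a b l) : l.Nodup := by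
  refine h.pairwise_transGen.imp ?_
  rintro u _ huw rfl
  exact hacyc u huw

theorem exists_eq_cons (h : IsEdgePath src dst a b l) : ∃ q, l = a :: q :=
  List.head?_eq_some_iff.1 h.2.1

theorem exists_eq_append_singleton (h : IsEdgePath src dst a b l) : ∃ p, l = p ++ [b] :=
  List.getLast?_eq_some_iff.1 h.2.2

theorem reflTransGen_of_mem (h : IsEdgePath src dst a b l) (hc : c ∈ l) :
    ReflTransGen (EdgeAdj src dst) a c := by
  obtain ⟨q, rfl⟩ := h.exists_eq_cons
  rcases List.mem_cons.1 hc with rfl | hcq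
  · exact .refl
  · exact (List.rel_of_pairwise_cons h.pairwise_transGen hcq).to_reflTransGen

theorem append_cons_iff {p q : List E} :
    IsEdgePath src dst a b (p ++ c :: q) ↔
      IsEdgePath src dst a c (p ++ [c]) ∧ IsEdgePath src dst c b (c :: q) := by
  have hhead : (p ++ c :: q).head? = (p ++ [c]).head? := by cases p <;> rfl
  have hlast : (p ++ c :: q).getLast? = (c :: q).getLast? :=
    List.getLast?_append_cons p c q
  simp only [isEdgePath_iff, List.isChain_split (l₁ := p) (l₂ := q), hhead, hlast,
    List.head?_cons, List.getLast?_concat]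
  tauto

theorem exists_suffix (h : IsEdgePath src dst a b l) (hc : c ∈ l) :
    ∃ q, IsEdgePath src dst c b q ∧ q <:+ l := by
  obtain ⟨p, q, rfl⟩ := List.append_of_mem hc
  exact ⟨c :: q, (append_cons_iff.1 h).2, List.suffix_append p _⟩

-- `a` and the transitions of a path determine its edges, which acyclicity orders in only one way.
theorem eq_of_pathExponent_eq (hacyc : ∀ a : E, ¬ TransGen (EdgeAdj src dst) a a)
    {b' : E} (h : IsEdgePath src dst a b l) (h' : IsEdgePath src dst a b' l')
    (heq : pathExponent l = pathExponent l') : l = l' := by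
  classical
  obtain ⟨q, rfl⟩ := h.exists_eq_cons
  obtain ⟨q', rfl⟩ := h'.exists_eq_cons
  have hpairs : ((a :: q).zip q).Perm ((a :: q').zip q') :=
    Multiset.coe_eq_coe.1 (Multiset.toFinsupp.injective heq)
  have hperm : q.Perm q' := by
    have hsnd (l : List E) : ((a :: l).zip l).map Prod.snd = l := List.map_snd_zip (by simp)
    simpa only [hsnd] using hpairs.map Prod.snd
  exact (hperm.cons a).eq_of_pairwise (fun u w _ _ huw hwu => (hacyc u (huw.trans hwu)).elim)
    h.pairwise_transGen h'.pairwise_transGen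

end IsEdgePath

/-- `IsBottleneck Paths a b c` says that `c` is a bottleneck between `a` and `b`: it lies on every
path from `a` to `b`. It holds vacuously if there is no such path. -/
def IsBottleneck (Paths : E → E → Finset (List E)) (a b c : E) : Prop :=
  ∀ l ∈ Paths a b, c ∈ l

variable {Paths : E → E → Finset (List E)}

theorem IsBottleneck.trans {w : E} (hPaths : ∀ a b l, l ∈ Paths a b ↔ IsEdgePath src dst a b l)
    (hc : IsBottleneck Paths a b c) (hw : IsBottleneck Paths c b w) :
    IsBottleneck Paths a b w := by
  intro l hl
  obtain ⟨q, hq, hql⟩ := ((hPaths a b l).1 hl).exists_suffix (hc l hl)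
  exact hql.subset (hw q ((hPaths c b q).2 hq))

theorem IsBottleneck.nonempty_paths (hPaths : ∀ a b l, l ∈ Paths a b ↔ IsEdgePath src dst a b l)
    (hc : IsBottleneck Paths a b c) (hab : (Paths a b).Nonempty) : (Paths c b).Nonempty := by
  obtain ⟨l, hl⟩ := hab
  obtain ⟨q, hq, -⟩ := ((hPaths a b l).1 hl).exists_suffix (hc l hl)
  exact ⟨q, (hPaths c b q).2 hq⟩

end Paths

section TransferPoly

variable {V E F : Type*} [Field F] {src dst : E → V} {Paths : E → E → Finset (List E)} {a b c : E}

theorem injOn_append_tail (hacyc : ∀ a : E, ¬ TransGen (EdgeAdj src dst) a a)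
    (hPaths : ∀ a b l, l ∈ Paths a b ↔ IsEdgePath src dst a b l) :
    Set.InjOn (fun x : List E × List E => x.1 ++ x.2.tail) (Paths a c ×ˢ Paths c b : Finset _) := by
  rintro ⟨p, q⟩ hpq ⟨p', q'⟩ hpq' heq
  simp only [Finset.coe_product, Set.mem_prod, Finset.mem_coe, hPaths] at hpq hpq'
  obtain ⟨p, rfl⟩ := hpq.1.exists_eq_append_singleton
  obtain ⟨q, rfl⟩ := hpq.2.exists_eq_cons
  obtain ⟨p', rfl⟩ := hpq'.1.exists_eq_append_singleton
  obtain ⟨q', rfl⟩ := hpq'.2.exists_eq_cons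
  have hcp : c ∉ p := (List.nodup_concat p c).1 (by simpa using hpq.1.nodup hacyc) |>.1
  have hcq : c ∉ q := (List.nodup_cons.1 (hpq.2.nodup hacyc)).1
  have hglue : p ++ c :: q = p' ++ c :: q' := by simpa using heq
  obtain ⟨rfl, -, rfl⟩ := (List.append_cons_inj_of_notMem hcp hcq).1 hglue
  rfl

theorem transferPoly_eq_mul_of_isBottleneck
    (hacyc : ∀ a : E, ¬ TransGen (EdgeAdj src dst) a a)
    (hPaths : ∀ a b l, l ∈ Paths a b ↔ IsEdgePath src dst a b l)
    (hc : IsBottleneck Paths a b c) :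
    transferPoly F Paths a b = transferPoly F Paths a c * transferPoly F Paths c b := by
  unfold transferPoly
  rw [Finset.sum_mul_sum, ← Finset.sum_product']
  symm
  refine Finset.sum_nbij (fun x => x.1 ++ x.2.tail) ?maps (injOn_append_tail hacyc hPaths) ?surj
    ?monomials
  case maps =>
    rintro ⟨p, q⟩ hpq
    simp only [Finset.mem_product, hPaths] at hpq
    obtain ⟨p, rfl⟩ := hpq.1.exists_eq_append_singleton
    obtain ⟨q, rfl⟩ := hpq.2.exists_eq_cons
    simpa [hPaths] using IsEdgePath.append_cons_iff.2 hpq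
  case surj =>
    intro l hl
    obtain ⟨p, q, rfl⟩ := List.append_of_mem (hc l hl)
    refine ⟨(p ++ [c], c :: q), ?_, by simp⟩
    simpa [hPaths] using IsEdgePath.append_cons_iff.1 ((hPaths a b _).1 hl)
  case monomials =>
    rintro ⟨p, q⟩ hpq
    simp only [Finset.mem_product, hPaths] at hpq
    obtain ⟨p, rfl⟩ := hpq.1.exists_eq_append_singleton
    obtain ⟨q, rfl⟩ := hpq.2.exists_eq_cons
    simpa using (pathMonomial_append_cons F p c q).symm

theorem mem_support_transferPoly (hacyc : ∀ a : E, ¬ TransGen (EdgeAdj src dst) a a)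
    (hPaths : ∀ a b l, l ∈ Paths a b ↔ IsEdgePath src dst a b l) {s : E × E →₀ ℕ} :
    s ∈ (transferPoly F Paths a b).support ↔ ∃ l ∈ Paths a b, pathExponent l = s := by
  classical
  have hcoeff : coeff s (transferPoly F Paths a b) =
      ∑ l ∈ Paths a b, if pathExponent l = s then (1 : F) else 0 := by
    simp only [transferPoly, pathMonomial_eq_monomial, coeff_sum, coeff_monomial]
  rw [mem_support_iff, hcoeff]
  constructor
  · intro hs
    obtain ⟨l, hl, hls⟩ := Finset.exists_ne_zero_of_sum_ne_zero hs
    exact ⟨l, hl, (ite_ne_right_iff.1 hls).1⟩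
  · rintro ⟨l, hl, rfl⟩
    rw [Finset.sum_eq_single_of_mem l hl, if_pos rfl]
    · exact one_ne_zero
    · intro l' hl' hne
      refine if_neg fun heq => hne ?_
      exact ((hPaths a b l').1 hl').eq_of_pathExponent_eq hacyc ((hPaths a b l).1 hl) heq

theorem mem_vars_transferPoly (hacyc : ∀ a : E, ¬ TransGen (EdgeAdj src dst) a a)
    (hPaths : ∀ a b l, l ∈ Paths a b ↔ IsEdgePath src dst a b l) {x : E × E} :
    x ∈ (transferPoly F Paths a b).vars ↔ ∃ l ∈ Paths a b, x ∈ l.consecutivePairs := by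
  simp only [mem_vars_iff_mem_support, mem_support_transferPoly hacyc hPaths,
    exists_exists_and_eq_and, mem_support_pathExponent]

theorem degreeOf_transferPoly_le_one (hacyc : ∀ a : E, ¬ TransGen (EdgeAdj src dst) a a)
    (hPaths : ∀ a b l, l ∈ Paths a b ↔ IsEdgePath src dst a b l) (x : E × E) :
    degreeOf x (transferPoly F Paths a b) ≤ 1 := by
  rw [degreeOf_le_iff]
  intro s hs
  obtain ⟨l, hl, rfl⟩ := (mem_support_transferPoly hacyc hPaths).1 hs
  exact pathExponent_apply_le_one (((hPaths a b l).1 hl).nodup hacyc) x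

theorem transferPoly_ne_zero (hacyc : ∀ a : E, ¬ TransGen (EdgeAdj src dst) a a)
    (hPaths : ∀ a b l, l ∈ Paths a b ↔ IsEdgePath src dst a b l) (hab : (Paths a b).Nonempty) :
    transferPoly F Paths a b ≠ 0 := by
  obtain ⟨l, hl⟩ := hab
  exact support_nonempty.1 ⟨_, (mem_support_transferPoly hacyc hPaths).2 ⟨l, hl, rfl⟩⟩

theorem exists_pathExponent_eq_add_of_eq_mul
    (hacyc : ∀ a : E, ¬ TransGen (EdgeAdj src dst) a a)
    (hPaths : ∀ a b l, l ∈ Paths a b ↔ IsEdgePath src dst a b l) {d g : MvPolynomial (E × E) F}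
    (hdg : transferPoly F Paths a b = d * g) {s t : E × E →₀ ℕ} (hs : s ∈ d.support)
    (ht : t ∈ g.support) : ∃ l ∈ Paths a b, pathExponent l = s + t := by
  have hne : d * g ≠ 0 := mul_ne_zero (support_nonempty.1 ⟨s, hs⟩) (support_nonempty.1 ⟨t, ht⟩)
  have hdisj : Disjoint d.vars g.vars :=
    disjoint_vars_of_degreeOf_mul_le_one hne (hdg ▸ degreeOf_transferPoly_le_one hacyc hPaths)
  rw [← mem_support_transferPoly (F := F) hacyc hPaths, hdg]
  exact add_mem_support_mul_of_disjoint_vars hdisj hs ht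

theorem isBottleneck_of_mem_vars_of_dvd (hacyc : ∀ a : E, ¬ TransGen (EdgeAdj src dst) a a)
    (hPaths : ∀ a b l, l ∈ Paths a b ↔ IsEdgePath src dst a b l) {d : MvPolynomial (E × E) F}
    (hd : d ∣ transferPoly F Paths a b) {u w : E} (huw : (u, w) ∈ d.vars)
    (hout : ∀ w', (w, w') ∉ d.vars) : IsBottleneck Paths a b w := by
  classical
  intro Q hQ
  obtain ⟨g, hdg⟩ := hd
  obtain ⟨s, hs, hsuw⟩ := (mem_vars_iff_mem_support _).1 huw
  obtain ⟨s', -, t, ht, hQst⟩ : ∃ s' ∈ d.support, ∃ t ∈ g.support, s' + t = pathExponent Q := by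
    rw [← Finset.mem_add]
    apply support_mul d g
    rw [← hdg, mem_support_transferPoly hacyc hPaths]
    exact ⟨Q, hQ, rfl⟩
  obtain ⟨R, hR, hRst⟩ := exists_pathExponent_eq_add_of_eq_mul hacyc hPaths hdg hs ht
  have huwR : (u, w) ∈ R.consecutivePairs := by
    rw [← mem_support_pathExponent, hRst]
    exact Finsupp.support_mono le_self_add hsuw
  have hwR : w ∈ R := List.mem_of_mem_tail (List.of_mem_zip huwR).2
  rcases getLast?_eq_or_exists_mem_consecutivePairs hwR with hlast | ⟨w', hww'⟩
  · have hbw : b = w := by simpa only [((hPaths a b R).1 hR).2.2, Option.some_inj] using hlast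
    exact hbw ▸ List.mem_of_getLast? ((hPaths a b Q).1 hQ).2.2
  · have hww't : (w, w') ∈ t.support := by
      rw [← mem_support_pathExponent, hRst] at hww'
      simpa [mem_support_notMem_vars_zero hs (hout w')] using hww'
    have hww'Q : (w, w') ∈ Q.consecutivePairs := by
      rw [← mem_support_pathExponent, ← hQst]
      exact Finsupp.support_mono le_add_self hww't
    exact (List.of_mem_zip hww'Q).1

theorem isRelPrime_transferPoly (hacyc : ∀ a : E, ¬ TransGen (EdgeAdj src dst) a a)
    (hPaths : ∀ a b l, l ∈ Paths a b ↔ IsEdgePath src dst a b l) (hab : (Paths a b).Nonempty)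
    (hbot : ∀ w, IsBottleneck Paths a b w → IsBottleneck Paths a c w → w = a) :
    IsRelPrime (transferPoly F Paths a b) (transferPoly F Paths a c) := by
  classical
  intro d hdb hdc
  by_contra hunit
  have hm : transferPoly F Paths a b ≠ 0 := transferPoly_ne_zero hacyc hPaths hab
  have hpath {u w : E} (huw : (u, w) ∈ d.vars) :
      ReflTransGen (EdgeAdj src dst) a u ∧ EdgeAdj src dst u w := by
    obtain ⟨l, hl, huwl⟩ :=
      (mem_vars_transferPoly hacyc hPaths).1 (vars_subset_vars_of_dvd hdb hm huw)
    have hl := (hPaths a b l).1 hl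
    exact ⟨hl.reflTransGen_of_mem (List.of_mem_zip huwl).1,
      rel_of_mem_consecutivePairs hl.isChain huwl⟩
  have hvars : d.vars.Nonempty := vars_nonempty_of_not_isUnit (ne_zero_of_dvd_ne_zero hm hdb) hunit
  obtain ⟨w, hw, hmax⟩ := exists_mem_forall_not_rel_of_acyclic hacyc (hvars.image Prod.snd)
  obtain ⟨⟨u, w⟩, huw, rfl⟩ := Finset.mem_image.1 hw
  have hout : ∀ w', (w, w') ∉ d.vars := fun w' hww' =>
    hmax w' (Finset.mem_image_of_mem Prod.snd hww') (hpath hww').2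
  obtain rfl : w = a := hbot w (isBottleneck_of_mem_vars_of_dvd hacyc hPaths hdb huw hout)
    (isBottleneck_of_mem_vars_of_dvd hacyc hPaths hdc huw hout)
  exact hacyc w (.tail' (hpath huw).1 (hpath huw).2)

end TransferPoly

theorem transfer_gcd_eq_last_common_bottleneck_general
    {V E F : Type*} [Field F] (src dst : E → V)
    (hacyc : ∀ a : E, ¬ TransGen (EdgeAdj src dst) a a)
    (Paths : E → E → Finset (List E))
    (hPaths : ∀ a b l, l ∈ Paths a b ↔ IsEdgePath src dst a b l)
    (e₁ e₂ e₃ e : E)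
    (h2 : (Paths e₁ e₂).Nonempty)
    (hbot2 : IsBottleneck Paths e₁ e₂ e) (hbot3 : IsBottleneck Paths e₁ e₃ e)
    (hlast : ∀ c : E, IsBottleneck Paths e₁ e₂ c → IsBottleneck Paths e₁ e₃ c →
      c = e ∨ TransGen (EdgeAdj src dst) c e) :
    transferPoly F Paths e₁ e ∣ transferPoly F Paths e₁ e₂ ∧
      transferPoly F Paths e₁ e ∣ transferPoly F Paths e₁ e₃ ∧
      ∀ d : MvPolynomial (E × E) F,
        d ∣ transferPoly F Paths e₁ e₂ → d ∣ transferPoly F Paths e₁ e₃ →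
          d ∣ transferPoly F Paths e₁ e := by
  let _ : GCDMonoid (MvPolynomial (E × E) F) := UniqueFactorizationMonoid.toGCDMonoid _
  have hne : (Paths e e₂).Nonempty := hbot2.nonempty_paths hPaths h2
  have hcoprime : IsRelPrime (transferPoly F Paths e e₂) (transferPoly F Paths e e₃) := by
    refine isRelPrime_transferPoly hacyc hPaths hne fun w hw2 hw3 => ?_
    obtain ⟨l, hl⟩ := hne
    have hew := ((hPaths e e₂ l).1 hl).reflTransGen_of_mem (hw2 l hl)
    exact (hlast w (hbot2.trans hPaths hw2) (hbot3.trans hPaths hw3)).resolve_right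
      fun hwe => hacyc e (.trans_right hew hwe)
  rw [transferPoly_eq_mul_of_isBottleneck hacyc hPaths hbot2,
    transferPoly_eq_mul_of_isBottleneck hacyc hPaths hbot3]
  exact ⟨dvd_mul_right _ _, dvd_mul_right _ _, fun d => dvd_of_dvd_mul_of_isRelPrime hcoprime⟩

/-- Let `e₁, e₂, e₃` be edges of a finite DAG with `e₂, e₃` reachable
from `e₁`, and let `e` be the last (in topological order) common bottleneck between
`e₁, e₂` and between `e₁, e₃` (i.e. `e` lies on every path `e₁ → e₂` and every path
`e₁ → e₃`, and every other such common bottleneck is strictly upstream of `e`). Then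
`m_{e₁e} = gcd(m_{e₁e₂}, m_{e₁e₃})`: `m_{e₁e}` divides both, and every common divisor of
`m_{e₁e₂}` and `m_{e₁e₃}` divides `m_{e₁e}`. -/
theorem transfer_gcd_eq_last_common_bottleneck
    {V E F : Type*} [Fintype E] [Field F] (src dst : E → V)
    (hacyc : ∀ a : E, ¬ Relation.TransGen (EdgeAdj src dst) a a)
    (Paths : E → E → Finset (List E))
    (hPaths : ∀ a b l, l ∈ Paths a b ↔ IsEdgePath src dst a b l)
    (e₁ e₂ e₃ e : E)
    (h2 : (Paths e₁ e₂).Nonempty) (h3 : (Paths e₁ e₃).Nonempty)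
    (hbot2 : ∀ l ∈ Paths e₁ e₂, e ∈ l) (hbot3 : ∀ l ∈ Paths e₁ e₃, e ∈ l)
    (hlast : ∀ c : E, (∀ l ∈ Paths e₁ e₂, c ∈ l) → (∀ l ∈ Paths e₁ e₃, c ∈ l) →
      c = e ∨ Relation.TransGen (EdgeAdj src dst) c e) :
    transferPoly F Paths e₁ e ∣ transferPoly F Paths e₁ e₂ ∧
      transferPoly F Paths e₁ e ∣ transferPoly F Paths e₁ e₃ ∧
      ∀ d : MvPolynomial (E × E) F,
        d ∣ transferPoly F Paths e₁ e₂ → d ∣ transferPoly F Paths e₁ e₃ →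
          d ∣ transferPoly F Paths e₁ e :=
  transfer_gcd_eq_last_common_bottleneck_general src dst hacyc Paths hPaths e₁ e₂ e₃ e h2
    hbot2 hbot3 hlast
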